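/- Let G be a basic piecewise ultrahomogeneous CUH graph in which both D and D̃ are realized. Then for every finite set U ⊆ R of red vertices and every maximal blue clique M_B, there exists a vertex b ∈ M_B adjacent to every vertex of U. -/

import Mathlib

open SimpleGraph

/-- A partial colored isomorphism of the 2-colored graph `(G, red)`, defined on the set `S`:
an injective map preserving colors and adjacency on `S`. -/
def IsPartialIso {V : Type} (G : SimpleGraph V) (red : V → Prop) (S : Set V) (f : V → V) :
    Prop :=
  Set.InjOn f S ∧ (∀ v ∈ S, (red (f v) ↔ red v)) ∧
    ∀ u ∈ S, ∀ v ∈ S, (G.Adj (f u) (f v) ↔ G.Adj u v)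

/-- A 2-colored graph is ultrahomogeneous if every isomorphism between two finite induced
colored subgraphs extends to a color-preserving automorphism. -/
def Ultrahomogeneous {V : Type} (G : SimpleGraph V) (red : V → Prop) : Prop :=
  ∀ S : Set V, S.Finite → ∀ f : V → V, IsPartialIso G red S f →
    ∃ ψ : G ≃g G, (∀ v, red (ψ v) ↔ red v) ∧ ∀ v ∈ S, ψ v = f v

/-- The set `P` induces a disjoint union of cliques in `G` (no induced monochromatic `P₃`). -/
def IsUnionOfCliques {V : Type} (G : SimpleGraph V) (P : Set V) : Prop :=
  ∀ u ∈ P, ∀ v ∈ P, ∀ w ∈ P, G.Adj u v → G.Adj v w → u ≠ w → G.Adj u w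

/-- `M` is an inclusion-wise maximal clique of the subgraph of `G` induced on `P`. -/
def IsMaxCliqueIn {V : Type} (G : SimpleGraph V) (P : Set V) (M : Set V) : Prop :=
  M ⊆ P ∧ G.IsClique M ∧ ∀ M' : Set V, M' ⊆ P → G.IsClique M' → M ⊆ M' → M = M'

/-- `S` is an independent set in `G`. -/
def IsIndepIn {V : Type} (G : SimpleGraph V) (S : Set V) : Prop :=
  ∀ u ∈ S, ∀ v ∈ S, ¬ G.Adj u v

/-- The 2-colored graph `(H, redH)` is realized in `(G, red)`, i.e. isomorphic to an
induced colored subgraph of `G`. -/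
def Realizes {V : Type} (G : SimpleGraph V) (red : V → Prop) {W : Type} (H : SimpleGraph W)
    (redH : W → Prop) : Prop :=
  ∃ f : W → V, Function.Injective f ∧ (∀ w, red (f w) ↔ redH w) ∧
    ∀ u w : W, G.Adj (f u) (f w) ↔ H.Adj u w

/-- `(H, redH)` is minimally omitted in `(G, red)`: it is omitted, but every proper induced
subgraph of it is realized. -/
def MinOmitted {V : Type} (G : SimpleGraph V) (red : V → Prop) {W : Type} (H : SimpleGraph W)
    (redH : W → Prop) : Prop :=
  ¬ Realizes G red H redH ∧
    ∀ S : Set W, S ≠ Set.univ → Realizes G red (H.induce S) (fun x => redH x.1)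

/-- Isomorphism of 2-colored graphs. -/
def ColoredIso {V : Type} (G : SimpleGraph V) (red : V → Prop) {W : Type} (H : SimpleGraph W)
    (redH : W → Prop) : Prop :=
  ∃ e : G ≃g H, ∀ v, red v ↔ redH (e v)

/-- The graph obtained from `G` by complementing the cross edges while keeping the
edges inside each color class. -/
def crossComp {V : Type} (G : SimpleGraph V) (red : V → Prop) : SimpleGraph V :=
  SimpleGraph.fromRel (fun u v =>
    ((red u ↔ red v) ∧ G.Adj u v) ∨ (¬ (red u ↔ red v) ∧ ¬ G.Adj u v))

/-- The blow-up of the 2-colored graph `(H, redH)` (whose red class should be independent),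
replacing every red vertex by a copy of `I` forming a clique, joined to the neighbors of the
original vertex. -/
def blowUp {V : Type} (H : SimpleGraph V) (redH : V → Prop) (I : Type) :
    SimpleGraph ({v : V // redH v} × I ⊕ {v : V // ¬ redH v}) :=
  SimpleGraph.fromRel (fun x y =>
    match x, y with
    | Sum.inl (u, i), Sum.inl (u', i') => H.Adj u.1 u'.1 ∨ (u = u' ∧ i ≠ i')
    | Sum.inl (u, _), Sum.inr b => H.Adj u.1 b.1
    | Sum.inr b, Sum.inl (u, _) => H.Adj b.1 u.1
    | Sum.inr b, Sum.inr b' => H.Adj b.1 b'.1)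

/-- The coloring of the blow-up: all vertices replacing red vertices are red. -/
def blowUpRed (V : Type) (redH : V → Prop) (I : Type) :
    ({v : V // redH v} × I ⊕ {v : V // ¬ redH v}) → Prop :=
  Sum.elim (fun _ => True) (fun _ => False)

/-- `(G, red)` is a blow-up with the red class blown up: it is isomorphic (as a colored graph)
to the blow-up of some `(H, redH)` with independent red class by an `i`-clique, `2 ≤ i ≤ ℵ₀`. -/
def IsBlowUpOf {V : Type} (G : SimpleGraph V) (red : V → Prop) : Prop :=
  ∃ (U : Type) (H : SimpleGraph U) (redH : U → Prop) (I : Type),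
    (∀ u v : U, redH u → redH v → ¬ H.Adj u v) ∧
    2 ≤ Cardinal.mk I ∧ Cardinal.mk I ≤ Cardinal.aleph0 ∧
    ∃ e : G ≃g blowUp H redH I, ∀ v, red v ↔ blowUpRed U redH I (e v)

/-- `(G, red)` is a blow-up (of one of its two color classes). -/
def IsBlowUp {V : Type} (G : SimpleGraph V) (red : V → Prop) : Prop :=
  IsBlowUpOf G red ∨ IsBlowUpOf G (fun v => ¬ red v)

/-- A CUH graph: a countably infinite ultrahomogeneous 2-colored graph in which both
color classes induce disjoint unions of cliques. -/
def IsCUH {V : Type} (G : SimpleGraph V) (red : V → Prop) : Prop :=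
  Countable V ∧ Infinite V ∧ Ultrahomogeneous G red ∧
    IsUnionOfCliques G {v | red v} ∧ IsUnionOfCliques G {v | ¬ red v}

/-- A basic CUH graph: a CUH graph which is not a blow-up and where both independence
numbers are at least 2. -/
def IsBasicCUH {V : Type} (G : SimpleGraph V) (red : V → Prop) : Prop :=
  IsCUH G red ∧ ¬ IsBlowUp G red ∧
    (∃ u v, red u ∧ red v ∧ u ≠ v ∧ ¬ G.Adj u v) ∧
    (∃ u v, ¬ red u ∧ ¬ red v ∧ u ≠ v ∧ ¬ G.Adj u v)

/-- The graph `D`: red vertices `0, 1`, blue vertices `2, 3`, edges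
`{01, 23, 02, 03, 12}` (a 2-colored diamond). -/
def Dgraph : SimpleGraph (Fin 4) :=
  SimpleGraph.fromRel (fun x y =>
    (x = 0 ∧ y = 1) ∨ (x = 2 ∧ y = 3) ∨ (x = 0 ∧ y = 2) ∨ (x = 0 ∧ y = 3) ∨ (x = 1 ∧ y = 2))

/-- The coloring of `D` and `D̃`: `0, 1` are red, `2, 3` are blue. -/
def Dred : Fin 4 → Prop := fun x => x = 0 ∨ x = 1

/-- The graph `D̃`, the cross-edge complement of `D`: the path `0 – 1 – 3 – 2`. -/
def Dtilde : SimpleGraph (Fin 4) :=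
  SimpleGraph.fromRel (fun x y => (x = 0 ∧ y = 1) ∨ (x = 1 ∧ y = 3) ∨ (x = 3 ∧ y = 2))

/-- `T_r`: the triangle with two red vertices and one blue vertex. -/
def Tr : SimpleGraph (Fin 3) := ⊤

/-- The coloring of `T_r` and `T̃_r`: `0, 1` red, `2` blue. -/
def TrRed : Fin 3 → Prop := fun x => x = 0 ∨ x = 1

/-- `T̃_r`: a red edge together with an isolated blue vertex. -/
def TrTilde : SimpleGraph (Fin 3) := SimpleGraph.fromRel (fun x y => x = 0 ∧ y = 1)

/-- `T_b`: the triangle with one red vertex and two blue vertices. -/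
def Tb : SimpleGraph (Fin 3) := ⊤

/-- The coloring of `T_b` and `T̃_b`: `0` red, `1, 2` blue. -/
def TbRed : Fin 3 → Prop := fun x => x = 0

/-- `T̃_b`: a blue edge together with an isolated red vertex. -/
def TbTilde : SimpleGraph (Fin 3) := SimpleGraph.fromRel (fun x y => x = 1 ∧ y = 2)

/-- Every finite partial injection of `X` into itself, or of `Y` into itself, extends to a
permutation of both `X` and `Y` that preserves the edges of `G` between `X` and `Y`. -/
def ExtendsPartialInjections {V : Type} (G : SimpleGraph V) (X Y : Set V) : Prop :=
  ∀ S : Set V, S.Finite → ∀ f : V → V, Set.InjOn f S →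
    (S ⊆ X ∧ Set.MapsTo f S X) ∨ (S ⊆ Y ∧ Set.MapsTo f S Y) →
    ∃ g : V → V, Set.BijOn g X X ∧ Set.BijOn g Y Y ∧
      (∀ x ∈ X, ∀ y ∈ Y, (G.Adj (g x) (g y) ↔ G.Adj x y)) ∧ Set.EqOn g f S

/-- A copy of `D` whose red vertices lie in `X` and whose blue vertices lie in `Y`. -/
def ContainsD {V : Type} (G : SimpleGraph V) (X Y : Set V) : Prop :=
  ∃ r₁ ∈ X, ∃ r₂ ∈ X, ∃ b₁ ∈ Y, ∃ b₂ ∈ Y, r₁ ≠ r₂ ∧ b₁ ≠ b₂ ∧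
    G.Adj r₁ b₁ ∧ G.Adj r₁ b₂ ∧ G.Adj r₂ b₁ ∧ ¬ G.Adj r₂ b₂

/-- A copy of `D̃` whose red vertices lie in `X` and whose blue vertices lie in `Y`. -/
def ContainsDtilde {V : Type} (G : SimpleGraph V) (X Y : Set V) : Prop :=
  ∃ r₁ ∈ X, ∃ r₂ ∈ X, ∃ b₁ ∈ Y, ∃ b₂ ∈ Y, r₁ ≠ r₂ ∧ b₁ ≠ b₂ ∧
    ¬ G.Adj r₁ b₁ ∧ ¬ G.Adj r₁ b₂ ∧ ¬ G.Adj r₂ b₁ ∧ G.Adj r₂ b₂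

section Pieces

variable {V : Type} {G : SimpleGraph V} {X Y : Set V}

theorem ExtendsPartialInjections.exists_map_single (h : ExtendsPartialInjections G X Y)
    {b c : V} (hb : b ∈ Y) (hc : c ∈ Y) :
    ∃ g : V → V, Set.BijOn g X X ∧ Set.BijOn g Y Y ∧
      (∀ x ∈ X, ∀ y ∈ Y, (G.Adj (g x) (g y) ↔ G.Adj x y)) ∧ g b = c := by
  obtain ⟨g, h1, h2, h3, h4⟩ := h {b} (Set.finite_singleton b) (fun _ => c)
    (Set.injOn_singleton _ _) (Or.inr ⟨by simpa using hb, fun _ _ => hc⟩)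
  exact ⟨g, h1, h2, h3, h4 rfl⟩

theorem ExtendsPartialInjections.exists_map_pair (h : ExtendsPartialInjections G X Y)
    {b b' c c' : V} (hb : b ∈ Y) (hb' : b' ∈ Y) (hne : b ≠ b') (hc : c ∈ Y) (hc' : c' ∈ Y)
    (hne' : c ≠ c') :
    ∃ g : V → V, Set.BijOn g X X ∧ Set.BijOn g Y Y ∧
      (∀ x ∈ X, ∀ y ∈ Y, (G.Adj (g x) (g y) ↔ G.Adj x y)) ∧ g b = c ∧ g b' = c' := by
  classical
  obtain ⟨g, h1, h2, h3, h4⟩ := h {b, b'} (Set.toFinite _)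
    (fun v => if v = b then c else c')
    (by
      rintro x (rfl | rfl) y (rfl | rfl) hxy
      · rfl
      · simp [hne.symm, hne'] at hxy
      · simp [hne.symm, hne'.symm] at hxy
      · rfl)
    (Or.inr ⟨by rintro x (rfl | rfl) <;> assumption,
      by intro x _; dsimp only; split_ifs <;> assumption⟩)
  refine ⟨g, h1, h2, h3, ?_, ?_⟩
  · simpa using h4 (Set.mem_insert b {b'})
  · simpa [hne.symm] using h4 (Set.mem_insert_of_mem b (Set.mem_singleton b'))

theorem exists_two_adj (h : ExtendsPartialInjections G X Y) (hD : ContainsD G X Y)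
    {b : V} (hb : b ∈ Y) :
    ∃ s₁ ∈ X, ∃ s₂ ∈ X, s₁ ≠ s₂ ∧ G.Adj s₁ b ∧ G.Adj s₂ b := by
  obtain ⟨r₁, hr₁, r₂, hr₂, b₁, hb₁, b₂, hb₂, hr, -, h11, -, h21, -⟩ := hD
  obtain ⟨g, hX, -, hadj, rfl⟩ := h.exists_map_single hb₁ hb
  exact ⟨g r₁, hX.mapsTo hr₁, g r₂, hX.mapsTo hr₂, fun e => hr (hX.injOn hr₁ hr₂ e),
    (hadj _ hr₁ _ hb₁).2 h11, (hadj _ hr₂ _ hb₁).2 h21⟩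

theorem exists_two_not_adj (h : ExtendsPartialInjections G X Y) (hD : ContainsDtilde G X Y)
    {b : V} (hb : b ∈ Y) :
    ∃ s₁ ∈ X, ∃ s₂ ∈ X, s₁ ≠ s₂ ∧ ¬ G.Adj s₁ b ∧ ¬ G.Adj s₂ b := by
  obtain ⟨r₁, hr₁, r₂, hr₂, b₁, hb₁, b₂, hb₂, hr, -, h11, -, h21, -⟩ := hD
  obtain ⟨g, hX, -, hadj, rfl⟩ := h.exists_map_single hb₁ hb
  exact ⟨g r₁, hX.mapsTo hr₁, g r₂, hX.mapsTo hr₂, fun e => hr (hX.injOn hr₁ hr₂ e),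
    fun e => h11 ((hadj _ hr₁ _ hb₁).1 e), fun e => h21 ((hadj _ hr₂ _ hb₁).1 e)⟩

theorem exists_adj_not_adj (h : ExtendsPartialInjections G X Y) (hD : ContainsD G X Y)
    {b c : V} (hb : b ∈ Y) (hc : c ∈ Y) (hne : b ≠ c) :
    ∃ x ∈ X, G.Adj x c ∧ ¬ G.Adj x b := by
  obtain ⟨r₁, hr₁, r₂, hr₂, b₁, hb₁, b₂, hb₂, -, hbb, -, -, h21, h22⟩ := hD
  obtain ⟨g, hX, -, hadj, rfl, rfl⟩ := h.exists_map_pair hb₂ hb₁ hbb.symm hb hc hne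
  exact ⟨g r₂, hX.mapsTo hr₂, (hadj _ hr₂ _ hb₁).2 h21, fun e => h22 ((hadj _ hr₂ _ hb₂).1 e)⟩

/-- If the neighborhood of `b` in `X` is finite, then each of its images under a permutation
of `X` is again a neighborhood. -/
theorem exists_neighborhood_perm (h : ExtendsPartialInjections G X Y) {b : V} (hb : b ∈ Y)
    (hfin : {x ∈ X | G.Adj x b}.Finite) (σ : Equiv.Perm V) (hσ : Set.MapsTo σ X X) :
    ∃ c ∈ Y, ∀ x ∈ X, (G.Adj x c ↔ G.Adj (σ.symm x) b ∧ σ.symm x ∈ X) := by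
  obtain ⟨g, hX, hY, hadj, heq⟩ := h _ hfin σ σ.injective.injOn
    (Or.inl ⟨fun x hx => hx.1, fun x hx => hσ hx.1⟩)
  refine ⟨g b, hY.mapsTo hb, fun x hx => ?_⟩
  constructor
  · intro hxb
    obtain ⟨x', hx', rfl⟩ := hX.surjOn hx
    have hx'b := (hadj _ hx' _ hb).1 hxb
    have : g x' = σ x' := heq ⟨hx', hx'b⟩
    rw [this, Equiv.symm_apply_apply]
    exact ⟨hx'b, hx'⟩
  · rintro ⟨hxb, hx'⟩
    have : g (σ.symm x) = x := by rw [heq ⟨hx', hxb⟩, Equiv.apply_symm_apply]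
    rw [← this]
    exact (hadj _ hx' _ hb).2 hxb

theorem infinite_neighborhood (h : ExtendsPartialInjections G X Y) (hD : ContainsD G X Y)
    (hDt : ContainsDtilde G X Y) {b : V} (hb : b ∈ Y) : {x ∈ X | G.Adj x b}.Infinite := by
  classical
  intro hfin
  obtain ⟨s₁, hs₁, s₂, hs₂, hs, hs₁b, hs₂b⟩ := exists_two_adj h hD hb
  obtain ⟨t₁, ht₁, t₂, ht₂, ht, ht₁b, ht₂b⟩ := exists_two_not_adj h hDt hb
  have hst : ∀ {s t}, G.Adj s b → ¬ G.Adj t b → s ≠ t := by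
    rintro s t h1 h2 rfl
    exact h2 h1
  have h11 := hst hs₁b ht₁b
  have h12 := hst hs₁b ht₂b
  have h21 := hst hs₂b ht₁b
  have h22 := hst hs₂b ht₂b
  have hswap : ∀ {s t}, s ∈ X → t ∈ X → Set.MapsTo (Equiv.swap s t) X X := by
    intro s t hs ht x hx
    rw [Equiv.swap_apply_def]
    split_ifs <;> assumption
  obtain ⟨c₁, hc₁, hN₁⟩ := exists_neighborhood_perm h hb hfin _ (hswap hs₁ ht₁)
  obtain ⟨c₂, hc₂, hN₂⟩ := exists_neighborhood_perm h hb hfin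
    (Equiv.swap s₁ t₁ * Equiv.swap s₂ t₂) ((hswap hs₁ ht₁).comp (hswap hs₂ ht₂))
  have hs₁c₁ : ¬ G.Adj s₁ c₁ := by
    rw [hN₁ _ hs₁]
    simp [ht₁b]
  have hother : ∀ x ∈ X, G.Adj x b → x ≠ s₁ → G.Adj x c₁ := by
    intro x hx hxb hxs
    rw [hN₁ _ hx, Equiv.symm_swap, Equiv.swap_apply_of_ne_of_ne hxs (hst hxb ht₁b)]
    exact ⟨hxb, hx⟩
  have hs₁c₂ : ¬ G.Adj s₁ c₂ := by
    rw [hN₂ _ hs₁]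
    have : (Equiv.swap s₁ t₁ * Equiv.swap s₂ t₂).symm s₁ = t₁ := by
      rw [Equiv.symm_apply_eq]
      simp [Equiv.swap_apply_of_ne_of_ne h21.symm ht]
    rw [this]
    exact fun e => ht₁b e.1
  have hs₂c₂ : ¬ G.Adj s₂ c₂ := by
    rw [hN₂ _ hs₂]
    have : (Equiv.swap s₁ t₁ * Equiv.swap s₂ t₂).symm s₂ = t₂ := by
      rw [Equiv.symm_apply_eq]
      simp [Equiv.swap_apply_of_ne_of_ne hs.symm h21]
    rw [this]
    exact fun e => ht₂b e.1
  have hbc₁ : b ≠ c₁ := by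
    rintro rfl
    exact hs₁c₁ hs₁b
  have hbc₂ : b ≠ c₂ := by
    rintro rfl
    exact hs₁c₂ hs₁b
  obtain ⟨g, hX, -, hadj, hgb, hgc⟩ := h.exists_map_pair hb hc₁ hbc₁ hb hc₂ hbc₂
  have hpre : ∀ s ∈ X, G.Adj s b → ¬ G.Adj s c₂ → g s₁ = s := by
    intro s hs hsb hsc
    obtain ⟨x, hx, rfl⟩ := hX.surjOn hs
    have hxb : G.Adj x b := (hadj _ hx _ hb).1 (by rwa [hgb])
    by_contra hne
    refine hsc ?_
    rw [← hgc]
    refine (hadj _ hx _ hc₁).2 (hother x hx hxb ?_)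
    rintro rfl
    exact hne rfl
  exact hs ((hpre _ hs₁ hs₁b hs₁c₂).symm.trans (hpre _ hs₂ hs₂b hs₂c₂))

theorem exists_dominating_of_subset (h : ExtendsPartialInjections G X Y) (hD : ContainsD G X Y)
    (hDt : ContainsDtilde G X Y) (A : Finset V) (hA : ↑A ⊆ X) :
    ∃ b ∈ Y, ∀ a ∈ A, G.Adj a b := by
  obtain ⟨b, hb⟩ : ∃ b, b ∈ Y := by
    obtain ⟨-, -, -, -, b, hb, -⟩ := hD
    exact ⟨b, hb⟩
  have hinf := infinite_neighborhood h hD hDt hb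
  have : Nonempty V := ⟨b⟩
  obtain ⟨f, hf, hinj⟩ := A.finite_toSet.exists_injOn_of_encard_le
    (t := {x ∈ X | G.Adj x b}) (by rw [hinf.encard_eq]; exact le_top)
  obtain ⟨g, hX, hY, hadj, heq⟩ := h A A.finite_toSet f hinj
    (Or.inl ⟨hA, fun x hx => (hf hx).1⟩)
  obtain ⟨y, hy, rfl⟩ := hY.surjOn hb
  refine ⟨y, hy, fun a ha => (hadj _ (hA ha) _ hy).1 ?_⟩
  rw [heq ha]
  exact (hf ha).2

theorem infinite_common_neighborhood (h : ExtendsPartialInjections G X Y)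
    (hD : ContainsD G X Y) (hDt : ContainsDtilde G X Y) {b c : V} (hb : b ∈ Y) (hc : c ∈ Y)
    (hne : b ≠ c) : {x ∈ X | G.Adj x b ∧ G.Adj x c}.Infinite := by
  classical
  intro hfin
  obtain ⟨A, hA, hcard⟩ :=
    (infinite_neighborhood h hD hDt hb).exists_subset_card_eq (hfin.toFinset.card + 1)
  obtain ⟨x, hx, -, -, -, hxb, -⟩ := exists_two_not_adj h hDt hb
  obtain ⟨d, hd, hdom⟩ := exists_dominating_of_subset h hD hDt (insert x A) (by
    rw [Finset.coe_insert]
    exact Set.insert_subset hx fun a ha => (hA ha).1)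
  have hbd : b ≠ d := by
    rintro rfl
    exact hxb (hdom x (Finset.mem_insert_self _ _))
  obtain ⟨g, hX, -, hadj, hgb, hgd⟩ := h.exists_map_pair hb hd hbd hb hc hne
  have hle : A.card ≤ hfin.toFinset.card := by
    refine Finset.card_le_card_of_injOn g (fun a ha => ?_)
      (hX.injOn.mono fun a ha => (hA ha).1)
    have haX := (hA ha).1
    have h1 := (hadj _ haX _ hb).2 (hA ha).2
    have h2 := (hadj _ haX _ hd).2 (hdom a (Finset.mem_insert_of_mem ha))
    rw [hgb] at h1
    rw [hgd] at h2
    exact hfin.mem_toFinset.2 ⟨hX.mapsTo haX, h1, h2⟩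
  omega

end Pieces

theorem exists_injOn_choice {α β : Type*} (s : Finset α) (T : α → Set β)
    (hT : ∀ a ∈ s, (T a).Infinite) [Nonempty β] :
    ∃ f : α → β, (∀ a ∈ s, f a ∈ T a) ∧ Set.InjOn f s := by
  classical
  induction s using Finset.induction_on with
  | empty => exact ⟨fun _ => Classical.arbitrary β, by simp, by simp⟩
  | insert a s ha ih =>
    obtain ⟨f, hf, hinj⟩ := ih fun a ha => hT a (Finset.mem_insert_of_mem ha)
    obtain ⟨x, hx, hxs⟩ := (hT a (Finset.mem_insert_self a s)).exists_notMem_finset (s.image f)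
    have hupd : ∀ w ∈ s, Function.update f a x w = f w := fun w hw =>
      Function.update_of_ne (by rintro rfl; exact ha hw) _ _
    refine ⟨Function.update f a x, fun w hw => ?_, ?_⟩
    · rcases Finset.mem_insert.1 hw with rfl | hw
      · simpa using hx
      · rw [hupd w hw]
        exact hf w hw
    · rw [Finset.coe_insert, Set.injOn_insert (by simpa using ha)]
      refine ⟨fun u hu v hv huv => hinj hu hv ?_, ?_⟩
      · rwa [hupd u hu, hupd v hv] at huv
      · rintro ⟨w, hw, hwa⟩
        rw [hupd w hw, Function.update_self] at hwa
        exact hxs (Finset.mem_image.2 ⟨w, hw, hwa⟩)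

section Cliques

variable {V : Type} {G : SimpleGraph V} {P M : Set V}

theorem IsMaxCliqueIn.mem_of_adj (hP : IsUnionOfCliques G P) (hM : IsMaxCliqueIn G P M)
    {u v : V} (hu : u ∈ M) (hv : v ∈ P) (huv : G.Adj u v) : v ∈ M := by
  have hclique : G.IsClique (insert v M) := by
    rw [SimpleGraph.isClique_insert]
    refine ⟨hM.2.1, fun w hw hvw => ?_⟩
    by_cases huw : u = w
    · exact huw ▸ huv.symm
    · exact hP v hv u (hM.1 hu) w (hM.1 hw) huv.symm (hM.2.1 hu hw huw) hvw
  rw [hM.2.2 _ (Set.insert_subset hv hM.1) hclique (Set.subset_insert v M)]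
  exact Set.mem_insert v M

theorem IsMaxCliqueIn.nonempty (hM : IsMaxCliqueIn G P M) (hP : P.Nonempty) : M.Nonempty := by
  obtain ⟨p, hp⟩ := hP
  by_contra hemp
  rw [Set.not_nonempty_iff_eq_empty] at hemp
  have := hM.2.2 {p} (by simpa using hp) (by simp) (by simp [hemp])
  rw [hemp] at this
  exact Set.singleton_ne_empty p this.symm

/-- The clique of `u` in the subgraph induced on `P`. -/
def cliqueOf (G : SimpleGraph V) (P : Set V) (u : V) : Set V := {v ∈ P | v = u ∨ G.Adj v u}

theorem isMaxCliqueIn_cliqueOf (hP : IsUnionOfCliques G P) {u : V} (hu : u ∈ P) :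
    IsMaxCliqueIn G P (cliqueOf G P u) := by
  refine ⟨fun v hv => hv.1, ?_, fun M' hM' hcl hsub => hsub.antisymm fun v hv => ⟨hM' hv, ?_⟩⟩
  · rintro v ⟨hv, rfl | hvu⟩ w ⟨hw, rfl | hwu⟩ hne
    · exact absurd rfl hne
    · exact hwu.symm
    · exact hvu
    · exact hP v hv u hu w hw hvu hwu.symm hne
  · by_cases h : v = u
    · exact Or.inl h
    · exact Or.inr (hcl hv (hsub ⟨hu, Or.inl rfl⟩) h)

theorem adj_iff_of_mem_cliqueOf (hP : IsUnionOfCliques G P) {u v u' v' : V} (hu : u ∈ P)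
    (hv : v ∈ P) (hu' : u' ∈ cliqueOf G P u) (hv' : v' ∈ cliqueOf G P v)
    (hne : u' = v' ↔ u = v) : G.Adj u' v' ↔ G.Adj u v := by
  have hclu := isMaxCliqueIn_cliqueOf hP hu
  have hclv := isMaxCliqueIn_cliqueOf hP hv
  have huu : u ∈ cliqueOf G P u := ⟨hu, Or.inl rfl⟩
  have hvv : v ∈ cliqueOf G P v := ⟨hv, Or.inl rfl⟩
  constructor
  · intro h
    have h1 := hclu.mem_of_adj hP hu' hv'.1 h
    have h2 : v ∈ cliqueOf G P u := by
      by_cases e : v' = v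
      · exact e ▸ h1
      · exact hclu.mem_of_adj hP h1 hv (hclv.2.1 hv' hvv e)
    exact hclu.2.1 huu h2 fun e => h.ne (hne.2 e)
  · intro h
    have h1 := hclu.mem_of_adj hP huu hv h
    have h2 : v' ∈ cliqueOf G P u := by
      by_cases e : v = v'
      · exact e ▸ h1
      · exact hclu.mem_of_adj hP h1 hv'.1 (hclv.2.1 hvv hv' e)
    exact hclu.2.1 hu' h2 fun e => h.ne (hne.1 e)

end Cliques

section Colored

variable {V : Type} {G : SimpleGraph V} {red : V → Prop}

theorem Ultrahomogeneous.extendsPartialInjections {X Y : Set V}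
    (hX : IsMaxCliqueIn G {v | red v} X) (hY : IsMaxCliqueIn G {v | ¬ red v} Y)
    (h : Ultrahomogeneous (G.induce (X ∪ Y)) (fun x => red x.1)) :
    ExtendsPartialInjections G X Y := by
  classical
  intro S hS f hinj hcase
  have hSsub : S ⊆ X ∪ Y := hcase.elim (fun h => h.1.trans Set.subset_union_left)
    fun h => h.1.trans Set.subset_union_right
  have hmaps : Set.MapsTo f S (X ∪ Y) := hcase.elim (fun h x hx => Or.inl (h.2 hx))
    fun h x hx => Or.inr (h.2 hx)
  have hcolor : ∀ v ∈ S, (red (f v) ↔ red v) := by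
    intro v hv
    rcases hcase with ⟨h1, h2⟩ | ⟨h1, h2⟩
    · exact iff_of_true (hX.1 (h2 hv)) (hX.1 (h1 hv))
    · exact iff_of_false (hY.1 (h2 hv)) (hY.1 (h1 hv))
  have hadj : ∀ u ∈ S, ∀ v ∈ S, (G.Adj (f u) (f v) ↔ G.Adj u v) := by
    intro u hu v hv
    by_cases huv : u = v
    · simp [huv]
    have hfuv : f u ≠ f v := fun e => huv (hinj hu hv e)
    rcases hcase with ⟨h1, h2⟩ | ⟨h1, h2⟩
    · exact iff_of_true (hX.2.1 (h2 hu) (h2 hv) hfuv) (hX.2.1 (h1 hu) (h1 hv) huv)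
    · exact iff_of_true (hY.2.1 (h2 hu) (h2 hv) hfuv) (hY.2.1 (h1 hu) (h1 hv) huv)
  let F : ↥(X ∪ Y) → ↥(X ∪ Y) := fun v => if hv : f v ∈ X ∪ Y then ⟨f v, hv⟩ else v
  have hF : ∀ v : ↥(X ∪ Y), v.1 ∈ S → (F v).1 = f v := by
    intro v hv
    simp only [F, dif_pos (hmaps hv)]
  obtain ⟨ψ, hψc, hψ⟩ := h (Subtype.val ⁻¹' S) (hS.preimage Subtype.val_injective.injOn) F
    ⟨fun u hu v hv e => Subtype.ext (hinj hu hv (by rw [← hF u hu, ← hF v hv, e])),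
      fun v hv => by beta_reduce; rw [hF v hv]; exact hcolor _ hv,
      fun u hu v hv => by
        simp only [SimpleGraph.comap_adj, Function.Embedding.subtype_apply]
        rw [hF u hu, hF v hv]
        exact hadj _ hu _ hv⟩
  have hredX : ∀ v : ↥(X ∪ Y), red v.1 ↔ v.1 ∈ X := fun v =>
    ⟨fun hr => v.2.resolve_right fun hy => hY.1 hy hr, fun hx => hX.1 hx⟩
  have hredY : ∀ v : ↥(X ∪ Y), ¬ red v.1 ↔ v.1 ∈ Y := fun v =>
    ⟨fun hr => v.2.resolve_left fun hx => hr (hX.1 hx), fun hy => hY.1 hy⟩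
  let g : V → V := fun v => if hv : v ∈ X ∪ Y then (ψ ⟨v, hv⟩).1 else v
  have hg : ∀ v : ↥(X ∪ Y), g v.1 = (ψ v).1 := fun v => by simp only [g, dif_pos v.2]
  have hbij : ∀ Z : Set V, Z ⊆ X ∪ Y → (∀ v : ↥(X ∪ Y), (ψ v).1 ∈ Z ↔ v.1 ∈ Z) →
      Set.BijOn g Z Z := by
    intro Z hZ hψZ
    refine ⟨fun v hv => ?_, fun u hu v hv e => ?_, fun v hv => ?_⟩
    · rw [hg ⟨v, hZ hv⟩]
      exact (hψZ _).2 hv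
    · rw [hg ⟨u, hZ hu⟩, hg ⟨v, hZ hv⟩] at e
      exact congrArg Subtype.val (ψ.injective (Subtype.ext e))
    · refine ⟨(ψ.symm ⟨v, hZ hv⟩).1, (hψZ _).1 ?_, ?_⟩
      · rw [RelIso.apply_symm_apply]
        exact hv
      · rw [hg, RelIso.apply_symm_apply]
  refine ⟨g, hbij X Set.subset_union_left fun v => ?_, hbij Y Set.subset_union_right fun v => ?_,
    fun x hx y hy => ?_, fun v hv => ?_⟩
  · rw [← hredX, ← hredX]
    exact hψc v
  · rw [← hredY, ← hredY]
    exact not_congr (hψc v)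
  · rw [hg ⟨x, Or.inl hx⟩, hg ⟨y, Or.inr hy⟩]
    exact ψ.map_adj_iff (v := ⟨x, Or.inl hx⟩) (w := ⟨y, Or.inr hy⟩)
  · rw [hg ⟨v, hSsub hv⟩, hψ ⟨v, hSsub hv⟩ hv, hF ⟨v, hSsub hv⟩ hv]

/-- A color-preserving automorphism can be chosen to move any red-blue pair onto any other
such pair with the same adjacency. -/
theorem Ultrahomogeneous.exists_map_cross_pair (h : Ultrahomogeneous G red) {r b x y : V}
    (hr : red r) (hb : ¬ red b) (hx : red x) (hy : ¬ red y) (hadj : G.Adj r b ↔ G.Adj x y) :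
    ∃ ψ : G ≃g G, (∀ v, red (ψ v) ↔ red v) ∧ ψ r = x ∧ ψ b = y := by
  classical
  have hrb : r ≠ b := by
    rintro rfl
    exact hb hr
  have hxy : x ≠ y := by
    rintro rfl
    exact hy hx
  obtain ⟨ψ, hc, hψ⟩ := h {r, b} (Set.toFinite _) (fun v => if v = r then x else y) (by
    refine ⟨?_, ?_, ?_⟩
    · rintro u (rfl | rfl) v (rfl | rfl) huv
      · rfl
      · simp [hrb.symm, hxy] at huv
      · simp [hrb.symm, hxy.symm] at huv
      · rfl
    · rintro u (rfl | rfl)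
      · simp [hr, hx]
      · simp [hrb.symm, hb, hy]
    · rintro u (rfl | rfl) v (rfl | rfl)
      · simp
      · simp [hrb.symm, hadj]
      · simpa [hrb.symm, G.adj_comm] using hadj.symm
      · simp)
  refine ⟨ψ, hc, ?_, ?_⟩
  · simpa using hψ r (by simp)
  · simpa [hrb.symm] using hψ b (by simp)

/-- A graph whose cross adjacency is not constant, spanning one red and one blue clique, is
realized between any two maximal cliques as soon as it is realized at all. -/
theorem exists_map_into_cliques (hU : Ultrahomogeneous G red)
    (hR : IsUnionOfCliques G {v | red v}) (hB : IsUnionOfCliques G {v | ¬ red v})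
    {r₁ r₂ b₁ b₂ : V} (hr₁ : red r₁) (hr₂ : red r₂) (hb₁ : ¬ red b₁) (hb₂ : ¬ red b₂)
    (hr : G.Adj r₁ r₂) (hb : G.Adj b₁ b₂) (hcross : G.Adj r₁ b₁ ↔ ¬ G.Adj r₂ b₂)
    {X Y : Set V} (hX : IsMaxCliqueIn G {v | red v} X) (hY : IsMaxCliqueIn G {v | ¬ red v} Y) :
    ∃ ψ : G ≃g G, ψ r₁ ∈ X ∧ ψ r₂ ∈ X ∧ ψ b₁ ∈ Y ∧ ψ b₂ ∈ Y := by
  obtain ⟨x, hx⟩ := hX.nonempty ⟨r₁, hr₁⟩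
  obtain ⟨y, hy⟩ := hY.nonempty ⟨b₁, hb₁⟩
  by_cases h : G.Adj r₁ b₁ ↔ G.Adj x y
  · obtain ⟨ψ, hc, rfl, rfl⟩ := hU.exists_map_cross_pair hr₁ hb₁ (hX.1 hx) (hY.1 hy) h
    exact ⟨ψ, hx, hX.mem_of_adj hR hx ((hc _).2 hr₂) (ψ.map_adj_iff.2 hr), hy,
      hY.mem_of_adj hB hy (fun e => hb₂ ((hc _).1 e)) (ψ.map_adj_iff.2 hb)⟩
  · obtain ⟨ψ, hc, rfl, rfl⟩ := hU.exists_map_cross_pair hr₂ hb₂ (hX.1 hx) (hY.1 hy)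
      (by tauto)
    exact ⟨ψ, hX.mem_of_adj hR hx ((hc _).2 hr₁) (ψ.map_adj_iff.2 hr.symm), hx,
      hY.mem_of_adj hB hy (fun e => hb₁ ((hc _).1 e)) (ψ.map_adj_iff.2 hb.symm), hy⟩

theorem IsCUH.containsD (hG : IsCUH G red) (hD : Realizes G red Dgraph Dred) {X Y : Set V}
    (hX : IsMaxCliqueIn G {v | red v} X) (hY : IsMaxCliqueIn G {v | ¬ red v} Y) :
    ContainsD G X Y := by
  obtain ⟨-, -, hU, hR, hB⟩ := hG
  obtain ⟨f, hinj, hc, hadj⟩ := hD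
  obtain ⟨ψ, h0, h1, h2, h3⟩ := exists_map_into_cliques hU hR hB
    (r₁ := f 0) (r₂ := f 1) (b₁ := f 2) (b₂ := f 3)
    (by simp [hc, Dred]) (by simp [hc, Dred]) (by simp [hc, Dred]) (by simp [hc, Dred])
    (by simp [hadj, Dgraph]) (by simp [hadj, Dgraph]) (by simp [hadj, Dgraph]) hX hY
  refine ⟨_, h0, _, h1, _, h2, _, h3, ?_, ?_, ?_, ?_, ?_, ?_⟩ <;>
    simp [ψ.map_adj_iff, hadj, hinj.eq_iff, Dgraph]

theorem IsCUH.containsDtilde (hG : IsCUH G red) (hD : Realizes G red Dtilde Dred) {X Y : Set V}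
    (hX : IsMaxCliqueIn G {v | red v} X) (hY : IsMaxCliqueIn G {v | ¬ red v} Y) :
    ContainsDtilde G X Y := by
  obtain ⟨-, -, hU, hR, hB⟩ := hG
  obtain ⟨f, hinj, hc, hadj⟩ := hD
  obtain ⟨ψ, h0, h1, h2, h3⟩ := exists_map_into_cliques hU hR hB
    (r₁ := f 0) (r₂ := f 1) (b₁ := f 2) (b₂ := f 3)
    (by simp [hc, Dred]) (by simp [hc, Dred]) (by simp [hc, Dred]) (by simp [hc, Dred])
    (by simp [hadj, Dtilde]) (by simp [hadj, Dtilde]) (by simp [hadj, Dtilde]) hX hY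
  refine ⟨_, h0, _, h1, _, h2, _, h3, ?_, ?_, ?_, ?_, ?_, ?_⟩ <;>
    simp [ψ.map_adj_iff, hadj, hinj.eq_iff, Dtilde]

/-- A blue vertex `b` dominating all of `U` but not `u` can be replaced by a vertex of the same
blue clique dominating `U` and `u`, if the relevant adjacency patterns with `b` and some other
vertex `c` of that clique occur in every red clique. -/
theorem exists_dominating_insert [DecidableEq V] (hU : Ultrahomogeneous G red)
    (hR : IsUnionOfCliques G {v | red v}) {b c u : V} {U : Finset V} (hb : ¬ red b)
    (hc : ¬ red c) (hbc : G.Adj b c) (hu : red u) (hUred : ∀ v ∈ U, red v)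
    (hbU : ∀ v ∈ U, G.Adj b v) (hbu : ¬ G.Adj b u)
    (hcommon : ∀ v, red v →
      {x ∈ cliqueOf G {v | red v} v | G.Adj x b ∧ G.Adj x c}.Infinite)
    (hdiff : ∃ x ∈ cliqueOf G {v | red v} u, G.Adj x c ∧ ¬ G.Adj x b) :
    ∃ d, ¬ red d ∧ G.Adj b d ∧ ∀ v ∈ insert u U, G.Adj d v := by
  obtain ⟨x, hx, hxc, hxb⟩ := hdiff
  have : Nonempty V := ⟨b⟩
  obtain ⟨f, hf, hinj⟩ := exists_injOn_choice U _ fun v hv => hcommon v (hUred v hv)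
  have huU : u ∉ U := fun h => hbu (hbU u h)
  let F : V → V := fun v => if v = b then b else if v = u then x else f v
  have hFb : F b = b := by simp [F]
  have hub : u ≠ b := by
    rintro rfl
    exact hb hu
  have hFu : F u = x := by simp [F, hub]
  have hFU : ∀ v ∈ U, F v = f v := by
    intro v hv
    have h1 : v ≠ b := by
      rintro rfl
      exact hb (hUred _ hv)
    have h2 : v ≠ u := by
      rintro rfl
      exact huU hv
    simp [F, h1, h2]
  have hred : ∀ v ∈ insert u U, red v := by
    intro v hv
    rcases Finset.mem_insert.1 hv with rfl | hv
    · exact hu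
    · exact hUred v hv
  have hFcl : ∀ v ∈ insert u U, F v ∈ cliqueOf G {v | red v} v := by
    intro v hv
    rcases Finset.mem_insert.1 hv with rfl | hv
    · rwa [hFu]
    · rw [hFU v hv]
      exact (hf v hv).1
  have hFc : ∀ v ∈ insert u U, G.Adj (F v) c := by
    intro v hv
    rcases Finset.mem_insert.1 hv with rfl | hv
    · rwa [hFu]
    · rw [hFU v hv]
      exact (hf v hv).2.2
  have hFadj : ∀ v ∈ insert u U, (G.Adj (F v) b ↔ G.Adj v b) := by
    intro v hv
    rcases Finset.mem_insert.1 hv with rfl | hv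
    · rw [hFu]
      exact iff_of_false hxb fun e => hbu e.symm
    · rw [hFU v hv]
      exact iff_of_true (hf v hv).2.1 (hbU v hv).symm
  have hFinj : Set.InjOn F ↑(insert u U) := by
    rw [Finset.coe_insert, Set.injOn_insert (by simpa using huU)]
    refine ⟨fun v hv w hw e => hinj hv hw ?_, ?_⟩
    · rwa [hFU v hv, hFU w hw] at e
    · rintro ⟨v, hv, e⟩
      rw [hFU v hv, hFu] at e
      exact hxb (e ▸ (hf v hv).2.1)
  obtain ⟨ψ, hψc, hψ⟩ := hU ↑(insert b (insert u U)) (Finset.finite_toSet _) F (by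
    refine ⟨?_, fun v hv => ?_, fun v hv w hw => ?_⟩
    · rw [Finset.coe_insert, Set.injOn_insert fun h => hb (hred b h)]
      refine ⟨hFinj, ?_⟩
      rintro ⟨v, hv, e⟩
      exact hb (by rw [← hFb, ← e]; exact (hFcl v hv).1)
    · rcases Finset.mem_insert.1 hv with rfl | hv
      · rw [hFb]
      · exact iff_of_true (hFcl v hv).1 (hred v hv)
    · rcases Finset.mem_insert.1 hv with rfl | hv' <;>
        rcases Finset.mem_insert.1 hw with rfl | hw'
      · simp
      · rw [hFb, G.adj_comm, hFadj w hw', G.adj_comm]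
      · rw [hFb, hFadj v hv']
      · exact adj_iff_of_mem_cliqueOf hR (hred v hv') (hred w hw') (hFcl v hv') (hFcl w hw')
          (hFinj.eq_iff hv' hw'))
  have hψb : ψ b = b := (hψ b (by simp)).trans hFb
  refine ⟨ψ.symm c, ?_, ?_, fun v hv => ?_⟩
  · rw [← hψc, RelIso.apply_symm_apply]
    exact hc
  · rw [← ψ.map_adj_iff, RelIso.apply_symm_apply, hψb]
    exact hbc
  · rw [← ψ.map_adj_iff, RelIso.apply_symm_apply, hψ v (Finset.mem_insert_of_mem hv)]
    exact (hFc v hv).symm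

end Colored

/-- in a basic piecewise ultrahomogeneous CUH graph realizing `D` and `D̃`,
every finite set of red vertices is dominated by a vertex of every maximal blue clique. -/
theorem stmt_18 {V : Type} (G : SimpleGraph V) (red : V → Prop)
    (hG : IsBasicCUH G red)
    (hpw : ∀ MR MB : Set V, IsMaxCliqueIn G {v | red v} MR →
      IsMaxCliqueIn G {v | ¬ red v} MB →
      Ultrahomogeneous (G.induce (MR ∪ MB)) (fun x => red x.1))
    (hD : Realizes G red Dgraph Dred) (hDt : Realizes G red Dtilde Dred) :
    ∀ U : Finset V, (∀ v ∈ U, red v) →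
      ∀ MB : Set V, IsMaxCliqueIn G {v | ¬ red v} MB →
        ∃ b ∈ MB, ∀ u ∈ U, G.Adj b u := by
  classical
  obtain ⟨hC, -, -, y₀, -, hy₀, -⟩ := hG
  obtain ⟨-, -, hU, hR, hB⟩ := id hC
  intro U hUred MB hMB
  induction U using Finset.induction_on with
  | empty =>
    obtain ⟨b, hb⟩ := hMB.nonempty ⟨y₀, hy₀⟩
    exact ⟨b, hb, by simp⟩
  | insert u U hu ih =>
    have hured : red u := hUred u (Finset.mem_insert_self u U)
    have hUred' : ∀ v ∈ U, red v := fun v hv => hUred v (Finset.mem_insert_of_mem hv)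
    obtain ⟨b, hb, hbU⟩ := ih hUred'
    by_cases hbu : G.Adj b u
    · refine ⟨b, hb, fun v hv => ?_⟩
      rcases Finset.mem_insert.1 hv with rfl | hv
      · exact hbu
      · exact hbU v hv
    have hpiece : ∀ v, red v →
        ExtendsPartialInjections G (cliqueOf G {v | red v} v) MB ∧
        ContainsD G (cliqueOf G {v | red v} v) MB ∧
        ContainsDtilde G (cliqueOf G {v | red v} v) MB := by
      intro v hv
      have hX := isMaxCliqueIn_cliqueOf hR hv
      exact ⟨(hpw _ _ hX hMB).extendsPartialInjections hX hMB, hC.containsD hD hX hMB,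
        hC.containsDtilde hDt hX hMB⟩
    obtain ⟨c, hc, hbc⟩ : ∃ c ∈ MB, b ≠ c := by
      obtain ⟨-, -, -, -, b₁, hb₁, b₂, hb₂, -, hne, -⟩ := (hpiece u hured).2.1
      by_cases h : b = b₁
      · exact ⟨b₂, hb₂, h ▸ hne⟩
      · exact ⟨b₁, hb₁, h⟩
    obtain ⟨d, hd, hbd, hdom⟩ := exists_dominating_insert hU hR (hMB.1 hb) (hMB.1 hc)
      (hMB.2.1 hb hc hbc) hured hUred' hbU hbu
      (fun v hv => infinite_common_neighborhood (hpiece v hv).1 (hpiece v hv).2.1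
        (hpiece v hv).2.2 hb hc hbc)
      (exists_adj_not_adj (hpiece u hured).1 (hpiece u hured).2.1 hb hc hbc)
    exact ⟨d, hMB.mem_of_adj hB hb hd hbd, hdom⟩
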